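/- arXiv:math/0303278 — 4 statements merged into one kernel-verified Lean document; each statement's English description precedes it below -/
import Mathlib

section
/- Let E be a complex normed vector space, let u, v : E → ℂ be complex-Fréchet differentiable at z₀ ∈ E, let t ∈ ℂ, and suppose v(z₀) ≠ 0 and u(z₀) = t · v(z₀). Let f(z) = Re(u(z)/v(z)). Then f is real-Fréchet differentiable at z₀ and the operator norm of its real Fréchet derivative satisfies ‖fderiv ℝ f z₀‖ = ‖fderiv ℂ u z₀ − t • fderiv ℂ v z₀‖ / ‖v(z₀)‖. -/
/-!
Where `u / v = t`, the quotient rule reads `d(u / v) = v⁻¹ • (du - t • dv)`. Taking real parts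
preserves the norm of a `𝕜`-linear functional `L`, since `Re L` determines `L` through
`L x = Re L x - i Re L (i x)` and this extension is isometric.
-/

section Quotient

variable {𝕜 𝕜' E : Type*} [NontriviallyNormedField 𝕜] [NormedField 𝕜'] [NormedAlgebra 𝕜 𝕜']
  [NormedAddCommGroup E] [NormedSpace 𝕜 E]

theorem hasFDerivAt_fun_inv {v : E → 𝕜'} {v' : E →L[𝕜] 𝕜'} {z : E}
    (hv : HasFDerivAt v v' z) (hz : v z ≠ 0) :
    HasFDerivAt (fun x => (v x)⁻¹) (-(v z ^ 2)⁻¹ • v') z := by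
  refine ((hasFDerivAt_inv' hz).comp z hv).congr_fderiv ?_
  ext x
  suffices -((v z)⁻¹ * v' x * (v z)⁻¹) = -(v z ^ 2)⁻¹ * v' x by simpa
  ring

theorem hasFDerivAt_fun_div {u v : E → 𝕜'} {u' v' : E →L[𝕜] 𝕜'} {z : E}
    (hu : HasFDerivAt u u' z) (hv : HasFDerivAt v v' z) (hz : v z ≠ 0) :
    HasFDerivAt (fun x => u x / v x) ((v z)⁻¹ • (u' - (u z / v z) • v')) z := by
  simp only [div_eq_mul_inv]
  refine (hu.mul (hasFDerivAt_fun_inv hv hz)).congr_fderiv ?_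
  module

end Quotient

section RealPart

variable {𝕜 E : Type*} [RCLike 𝕜]

theorem norm_reCLM_comp_restrictScalars [SeminormedAddCommGroup E] [NormedSpace 𝕜 E]
    [NormedSpace ℝ E] [IsScalarTower ℝ 𝕜 E] (L : StrongDual 𝕜 E) :
    ‖RCLike.reCLM.comp (L.restrictScalars ℝ)‖ = ‖L‖ :=
  StrongDual.extendRCLikeₗᵢ.symm.norm_map L

variable [NormedAddCommGroup E] [NormedSpace 𝕜 E] [NormedSpace ℝ E] [IsScalarTower ℝ 𝕜 E]

theorem hasFDerivAt_re {g : E → 𝕜} {g' : StrongDual 𝕜 E} {z : E} (hg : HasFDerivAt g g' z) :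
    HasFDerivAt (fun x => RCLike.re (g x)) (RCLike.reCLM.comp (g'.restrictScalars ℝ)) z :=
  RCLike.reCLM.hasFDerivAt.comp z (hg.restrictScalars ℝ)

theorem norm_fderiv_re {g : E → 𝕜} {z : E} (hg : DifferentiableAt 𝕜 g z) :
    ‖fderiv ℝ (fun x => RCLike.re (g x)) z‖ = ‖fderiv 𝕜 g z‖ := by
  rw [(hasFDerivAt_re hg.hasFDerivAt).fderiv, norm_reCLM_comp_restrictScalars]

theorem norm_fderiv_re_quotient_general (u v : E → 𝕜) (z₀ : E) (t : 𝕜)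
    (hu : DifferentiableAt 𝕜 u z₀) (hv : DifferentiableAt 𝕜 v z₀)
    (hv0 : v z₀ ≠ 0) (huv : u z₀ = t * v z₀) :
    DifferentiableAt ℝ (fun z => RCLike.re (u z / v z)) z₀ ∧
    ‖fderiv ℝ (fun z => RCLike.re (u z / v z)) z₀‖
      = ‖fderiv 𝕜 u z₀ - t • fderiv 𝕜 v z₀‖ / ‖v z₀‖ := by
  have ht : u z₀ / v z₀ = t := (div_eq_iff hv0).mpr huv
  have hquot : HasFDerivAt (fun z => u z / v z)
      ((v z₀)⁻¹ • (fderiv 𝕜 u z₀ - t • fderiv 𝕜 v z₀)) z₀ :=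
    ht ▸ hasFDerivAt_fun_div hu.hasFDerivAt hv.hasFDerivAt hv0
  refine ⟨(hasFDerivAt_re hquot).differentiableAt, ?_⟩
  rw [norm_fderiv_re hquot.differentiableAt, hquot.fderiv, norm_smul, norm_inv, inv_mul_eq_div]

end RealPart

/-- For the family of hypersurfaces `Y_t = {u = t·v}`, the function `f = Re (u/v)`
is real-Fréchet differentiable at a point of `Y_t` and the operator norm of its
derivative is `‖du − t • dv‖ / ‖v‖` (the identity `|∇f| = |d(u − t v)|/|v|`). -/
theorem norm_fderiv_re_quotient
    {E : Type*} [NormedAddCommGroup E] [NormedSpace ℂ E]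
    (u v : E → ℂ) (z₀ : E) (t : ℂ)
    (hu : DifferentiableAt ℂ u z₀) (hv : DifferentiableAt ℂ v z₀)
    (hv0 : v z₀ ≠ 0) (huv : u z₀ = t * v z₀) :
    DifferentiableAt ℝ (fun z => (u z / v z).re) z₀ ∧
    ‖fderiv ℝ (fun z => (u z / v z).re) z₀‖
      = ‖fderiv ℂ u z₀ - t • fderiv ℂ v z₀‖ / ‖v z₀‖ :=
  norm_fderiv_re_quotient_general u v z₀ t hu hv hv0 huv
end

section
/- Let n ≥ 1 and let M be an n × n complex matrix such that ‖M i j‖ ≤ C for all indices i, j (with C ≥ 0) and |det M| ≥ c for some c > 0. Then M is invertible and every entry of its inverse satisfies ‖M⁻¹ i j‖ ≤ (n−1)! · C^(n−1) / c. -/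
open scoped Matrix

open Matrix
open scoped Nat

theorem abv_adjugate_fin_succ_apply {R S : Type*} [CommRing R] [CommRing S] [PartialOrder S]
    [IsOrderedRing S] [NoZeroDivisors S] (abv : AbsoluteValue R S) {m : ℕ}
    (A : Matrix (Fin (m + 1)) (Fin (m + 1)) R) (i j : Fin (m + 1)) :
    abv (A.adjugate i j) = abv (A.submatrix j.succAbove i.succAbove).det := by
  rw [adjugate_fin_succ_eq_det_submatrix]
  obtain h_sign | h_sign := neg_one_pow_eq_or R (j + i : ℕ) <;> simp [h_sign]

section AdjugateBound

variable {R S : Type*} [CommRing R] [Nontrivial R]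
  [CommRing S] [LinearOrder S] [IsStrictOrderedRing S]

theorem abv_adjugate_fin_succ_apply_le (abv : AbsoluteValue R S) {m : ℕ}
    {A : Matrix (Fin (m + 1)) (Fin (m + 1)) R} {x : S} (hx : ∀ i j, abv (A i j) ≤ x)
    (i j : Fin (m + 1)) :
    abv (A.adjugate i j) ≤ m ! * x ^ m :=
  calc
    abv (A.adjugate i j) = abv (A.submatrix j.succAbove i.succAbove).det :=
      abv_adjugate_fin_succ_apply abv A i j
    _ ≤ (Fintype.card (Fin m))! • x ^ Fintype.card (Fin m) := det_le fun _ _ => hx _ _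
    _ = m ! * x ^ m := by rw [Fintype.card_fin, nsmul_eq_mul]

theorem abv_adjugate_apply_le {ι : Type*} [Fintype ι] [DecidableEq ι]
    (abv : AbsoluteValue R S) {A : Matrix ι ι R} {x : S} (hx : ∀ i j, abv (A i j) ≤ x)
    (i j : ι) :
    abv (A.adjugate i j) ≤ (Fintype.card ι - 1)! * x ^ (Fintype.card ι - 1) := by
  have : Nonempty ι := ⟨i⟩
  let e : ι ≃ Fin (Fintype.card ι - 1 + 1) :=
    Fintype.equivFinOfCardEq (Nat.sub_add_cancel Fintype.card_pos).symm
  have h_reindex : A.adjugate i j = (reindex e e A).adjugate (e i) (e j) := by simp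
  rw [h_reindex]
  exact abv_adjugate_fin_succ_apply_le abv (fun _ _ => hx _ _) (e i) (e j)

end AdjugateBound

theorem abv_inv_apply {ι K S : Type*} [Fintype ι] [DecidableEq ι] [Field K] [Semifield S]
    [PartialOrder S] (abv : AbsoluteValue K S) (M : Matrix ι ι K) (i j : ι) :
    abv (M⁻¹ i j) = abv (M.adjugate i j) / abv M.det := by
  rw [inv_def, Matrix.smul_apply, smul_eq_mul, Ring.inverse_eq_inv', map_mul, map_inv₀,
    inv_mul_eq_div]

theorem inverse_entries_bound_general {ι K S : Type*} [Fintype ι] [DecidableEq ι] [Field K]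
    [Field S] [LinearOrder S] [IsStrictOrderedRing S] (abv : AbsoluteValue K S)
    {M : Matrix ι ι K} {C c : S} (hc : 0 < c) (hbd : ∀ i j, abv (M i j) ≤ C)
    (hdet : c ≤ abv M.det) :
    IsUnit M ∧
      ∀ i j, abv (M⁻¹ i j) ≤ (Fintype.card ι - 1)! * C ^ (Fintype.card ι - 1) / c := by
  have det_ne_zero : M.det ≠ 0 := abv.pos_iff.mp (hc.trans_le hdet)
  refine ⟨M.isUnit_iff_isUnit_det.mpr det_ne_zero.isUnit, fun i j => ?_⟩
  have hC : 0 ≤ C := (abv.nonneg _).trans (hbd i j)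
  calc
    abv (M⁻¹ i j) = abv (M.adjugate i j) / abv M.det := abv_inv_apply abv M i j
    _ ≤ (Fintype.card ι - 1)! * C ^ (Fintype.card ι - 1) / c :=
      div_le_div₀ (by positivity) (abv_adjugate_apply_le abv hbd i j) hc hdet

/-- A square complex matrix with entries bounded by `C` and determinant of absolute
value at least `c > 0` is invertible, and the entries of its inverse are bounded by
`(n−1)! · C^(n−1) / c`. -/
theorem inverse_entries_bound
    (n : ℕ) (hn : 1 ≤ n) (M : Matrix (Fin n) (Fin n) ℂ) (C c : ℝ)
    (hC : 0 ≤ C) (hc : 0 < c)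
    (hbd : ∀ i j, ‖M i j‖ ≤ C) (hdet : c ≤ ‖M.det‖) :
    IsUnit M ∧ ∀ i j, ‖M⁻¹ i j‖ ≤ (Nat.factorial (n - 1) : ℝ) * C ^ (n - 1) / c := by
  simpa only [Fintype.card_fin] using!
    inverse_entries_bound_general (NormedField.toAbsoluteValue ℂ) hc hbd hdet
end

section
/- Let n ≥ 1, let f : ℝⁿ → ℝ be twice continuously differentiable, let k be a coordinate index, p > 0, 0 < α ≤ 1 and H ≥ 0. Assume f is periodic with period p in the k-th coordinate, i.e. f(x + p·e_k) = f(x) for all x, and that the second partial derivative ∂²f/∂x_k² is α-Hölder with constant H: |∂²_{kk}f(x) − ∂²_{kk}f(y)| ≤ H·‖x − y‖^α for all x, y. Then |∂f/∂x_k (x)| ≤ H · p^(1+α) for every x ∈ ℝⁿ. -/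
/-!
On each line in the direction of periodicity the problem is one-dimensional. By Rolle's theorem the
derivative of a `p`-periodic function vanishes within distance `p` of every point, so it is bounded
by its own oscillation at scale `p`. Applied to `f'`, this bounds `f''` by `H * p ^ α`; the mean
value inequality then bounds the oscillation of `f'` by `H * p ^ α * p`, and the same principle
applied to `f` bounds `f'`.
-/

theorem periodic_of_hasDerivAt {𝕜 F : Type*} [NontriviallyNormedField 𝕜] [NormedAddCommGroup F]
    [NormedSpace 𝕜 F] {g g' : 𝕜 → F} {p : 𝕜} (hper : Function.Periodic g p)
    (hg : ∀ t, HasDerivAt g (g' t) t) : Function.Periodic g' p := by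
  intro t
  have hshift : HasDerivAt g (g' (t + p)) t := by
    simpa only [hper.funext] using (hg (t + p)).comp_add_const t p
  exact hshift.unique (hg t)

theorem hasDerivAt_comp_add_smul {𝕜 E F : Type*} [NontriviallyNormedField 𝕜] [AddCommGroup E]
    [Module 𝕜 E] [NormedAddCommGroup F] [NormedSpace 𝕜 F] {f f' : E → F} {v : E}
    (hf : ∀ x, HasLineDerivAt 𝕜 f (f' x) x v) (x : E) (t : 𝕜) :
    HasDerivAt (fun s : 𝕜 => f (x + s • v)) (f' (x + t • v)) t := by
  have hbase : HasDerivAt (fun s : 𝕜 => f (x + t • v + s • v)) (f' (x + t • v)) (t - t) := by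
    rw [sub_self]
    exact hf (x + t • v)
  simpa only [add_assoc, ← add_smul, add_sub_cancel] using hbase.comp_sub_const t t

section Real

variable {g g' g'' : ℝ → ℝ} {p : ℝ}

theorem exists_mem_Ioo_deriv_eq_zero_of_periodic (hp : 0 < p) (hper : Function.Periodic g p)
    (hg : ∀ t, HasDerivAt g (g' t) t) (a : ℝ) : ∃ c ∈ Set.Ioo a (a + p), g' c = 0 :=
  exists_hasDerivAt_eq_zero (lt_add_of_pos_right a hp)
    (fun t _ => (hg t).continuousAt.continuousWithinAt) (hper a).symm (fun t _ => hg t)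

theorem abs_deriv_le_of_periodic_of_abs_sub_le {M : ℝ} (hp : 0 < p) (hper : Function.Periodic g p)
    (hg : ∀ t, HasDerivAt g (g' t) t) (hosc : ∀ s t, |s - t| ≤ p → |g' s - g' t| ≤ M) (t : ℝ) :
    |g' t| ≤ M := by
  obtain ⟨c, ⟨htc, hcp⟩, hc⟩ := exists_mem_Ioo_deriv_eq_zero_of_periodic hp hper hg t
  have hdist : |t - c| ≤ p := abs_le.mpr ⟨by linarith, by linarith⟩
  simpa only [hc, sub_zero] using hosc t c hdist

theorem abs_deriv_le_mul_of_periodic_of_abs_sub_le {M : ℝ} (hp : 0 < p)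
    (hper : Function.Periodic g p) (hg : ∀ t, HasDerivAt g (g' t) t)
    (hg' : ∀ t, HasDerivAt g' (g'' t) t) (hosc : ∀ s t, |s - t| ≤ p → |g'' s - g'' t| ≤ M)
    (t : ℝ) : |g' t| ≤ M * p := by
  have hbound : ∀ s, |g'' s| ≤ M :=
    abs_deriv_le_of_periodic_of_abs_sub_le hp (periodic_of_hasDerivAt hper hg) hg' hosc
  have hM : 0 ≤ M := (abs_nonneg _).trans (hbound 0)
  refine abs_deriv_le_of_periodic_of_abs_sub_le hp hper hg (fun r s hrs => ?_) t
  calc |g' r - g' s| ≤ M * |r - s| :=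
        convex_univ.norm_image_sub_le_of_norm_hasDerivWithin_le
          (fun u _ => (hg' u).hasDerivWithinAt) (fun u _ => hbound u) (Set.mem_univ s)
          (Set.mem_univ r)
    _ ≤ M * p := by gcongr

end Real

theorem periodic_first_derivative_bound_general {E : Type*} [AddCommGroup E] [Module ℝ E]
    {f f' f'' : E → ℝ} {v : E} {p α H : ℝ} (hf : ∀ x, HasLineDerivAt ℝ f (f' x) x v)
    (hf' : ∀ x, HasLineDerivAt ℝ f' (f'' x) x v) (hp : 0 < p) (hα : 0 ≤ α)
    (hper : Function.Periodic f (p • v))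
    (hHolder : ∀ x (t : ℝ), |f'' (x + t • v) - f'' x| ≤ H * |t| ^ α) (x : E) :
    |f' x| ≤ H * p ^ (1 + α) := by
  have hH : 0 ≤ H := by simpa using (abs_nonneg _).trans (hHolder x 1)
  have hperLine : Function.Periodic (fun t : ℝ => f (x + t • v)) p := fun t => by
    simpa only [add_smul, add_assoc] using hper (x + t • v)
  have hosc (s t : ℝ) (hst : |s - t| ≤ p) : |f'' (x + s • v) - f'' (x + t • v)| ≤ H * p ^ α :=
    calc |f'' (x + s • v) - f'' (x + t • v)| ≤ H * |s - t| ^ α := by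
          simpa only [add_assoc, ← add_smul, add_sub_cancel] using hHolder (x + t • v) (s - t)
      _ ≤ H * p ^ α := by gcongr
  calc |f' x| = |f' (x + (0 : ℝ) • v)| := by rw [zero_smul, add_zero]
    _ ≤ H * p ^ α * p := abs_deriv_le_mul_of_periodic_of_abs_sub_le hp hperLine
        (hasDerivAt_comp_add_smul hf x) (hasDerivAt_comp_add_smul hf' x) hosc 0
    _ = H * p ^ (1 + α) := by rw [Real.rpow_add hp, Real.rpow_one]; ring

/-- Rescaled Lemma 3.5, first estimate: if `f : ℝⁿ → ℝ` is `C²`, periodic with period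
`p` in the `k`-th coordinate, and the pure second derivative `∂²_{kk} f` is `α`-Hölder
with constant `H`, then `|∂f/∂x_k| ≤ H · p^(1+α)` everywhere. -/
theorem periodic_first_derivative_bound
    (n : ℕ) (hn : 1 ≤ n) (f : EuclideanSpace ℝ (Fin n) → ℝ)
    (hf : ContDiff ℝ 2 f) (k : Fin n) (p α H : ℝ)
    (hp : 0 < p) (hα0 : 0 < α) (hα1 : α ≤ 1) (hH : 0 ≤ H)
    (hper : ∀ x, f (x + p • EuclideanSpace.single k 1) = f x)
    (hHolder : ∀ x y,
      |fderiv ℝ (fun w => fderiv ℝ f w (EuclideanSpace.single k 1)) x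
          (EuclideanSpace.single k 1) -
        fderiv ℝ (fun w => fderiv ℝ f w (EuclideanSpace.single k 1)) y
          (EuclideanSpace.single k 1)| ≤ H * ‖x - y‖ ^ α) :
    ∀ x, |fderiv ℝ f x (EuclideanSpace.single k 1)| ≤ H * p ^ (1 + α) := by
  have hf' : ContDiff ℝ 1 (fun w => fderiv ℝ f w (EuclideanSpace.single k 1)) :=
    (hf.fderiv_right (by norm_num)).clm_apply contDiff_const
  exact periodic_first_derivative_bound_general
    (fun x => (hf.differentiable two_ne_zero x).hasFDerivAt.hasLineDerivAt _)
    (fun x => (hf'.differentiable one_ne_zero x).hasFDerivAt.hasLineDerivAt _) hp hα0.le hper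
    (fun x t => (hHolder _ x).trans_eq (by rw [add_sub_cancel_left, norm_smul]; simp))
end

section
/- Let n ≥ 1, let f : ℝⁿ → ℝ be twice continuously differentiable, let k be a coordinate index, p > 0, 0 < α ≤ 1 and H ≥ 0. Assume f is periodic with period p in the k-th coordinate, i.e. f(x + p·e_k) = f(x) for all x, and that |∂²_{kk}f(x) − ∂²_{kk}f(y)| ≤ H·‖x − y‖^α for all x, y. Then |∂²f/∂x_k² (x)| ≤ H · p^α for every x ∈ ℝⁿ. -/
/-!
For fixed `x`, the function `t ↦ ∂ᵥf (x + t • v)` takes the same value at `0` and `p`, so its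
derivative `t ↦ ∂²ᵥf (x + t • v)` has mean zero on `[0, p]`. By the Hölder condition that derivative
stays within `H * (p * ‖v‖) ^ α` of `∂²ᵥf x` there, hence so does its mean. The mean value
inequality replaces the integral of `∂²ᵥf`, which need not exist.
-/

open Function Set

section LineDerivative

variable {𝕜 E F : Type*} [NontriviallyNormedField 𝕜] [NormedAddCommGroup F] [NormedSpace 𝕜 F]

theorem hasDerivAt_add_smul_of_hasLineDerivAt [AddCommGroup E] [Module 𝕜 E]
    {f : E → F} {f' : F} {x v : E} {t : 𝕜} (hf : HasLineDerivAt 𝕜 f f' (x + t • v) v) :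
    HasDerivAt (fun s : 𝕜 => f (x + s • v)) f' t := by
  have hline : (fun s : 𝕜 => f (x + s • v)) = fun s => f (x + t • v + (s - t) • v) :=
    funext fun s => by rw [add_assoc, ← add_smul, add_sub_cancel]
  rw [HasLineDerivAt, ← sub_self t] at hf
  rw [hline]
  exact hf.comp_sub_const t t

theorem periodic_of_hasLineDerivAt [AddCommGroup E] [Module 𝕜 E] {f f' : E → F} {u v : E}
    (hf : ∀ x, HasLineDerivAt 𝕜 f (f' x) x v) (hper : Periodic f u) : Periodic f' u := by
  intro x
  have hline : (fun t : 𝕜 => f (x + u + t • v)) = fun t => f (x + t • v) :=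
    funext fun t => by rw [add_right_comm, hper]
  have hx : HasLineDerivAt 𝕜 f (f' x) (x + u) v := by
    rw [HasLineDerivAt, hline]
    exact hf x
  exact (hf (x + u)).unique hx

theorem hasLineDerivAt_fderiv_apply [NormedAddCommGroup E] [NormedSpace 𝕜 E]
    {f : E → F} {x : E} (hf : DifferentiableAt 𝕜 (fderiv 𝕜 f) x) (u v : E) :
    HasLineDerivAt 𝕜 (fun w => fderiv 𝕜 f w v) (fderiv 𝕜 (fun w => fderiv 𝕜 f w v) x u) x u :=
  (hf.clm_apply (differentiableAt_const v)).hasFDerivAt.hasLineDerivAt u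

end LineDerivative

section MeanValue

variable {E F : Type*} [NormedAddCommGroup F] [NormedSpace ℝ F]

theorem norm_le_of_norm_deriv_sub_le_of_eq_endpoints {φ φ' : ℝ → F} {a b C : ℝ} {c : F}
    (hab : a < b) (hφ : ∀ t ∈ Icc a b, HasDerivWithinAt φ (φ' t) (Icc a b) t)
    (heq : φ a = φ b) (hC : ∀ t ∈ Ico a b, ‖φ' t - c‖ ≤ C) : ‖c‖ ≤ C := by
  have hderiv : ∀ t ∈ Icc a b,
      HasDerivWithinAt (fun s => φ s - s • c) (φ' t - c) (Icc a b) t := fun t ht => by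
    simpa only [id, one_smul] using (hφ t ht).fun_sub ((hasDerivWithinAt_id t _).smul_const c)
  have hincr : (φ b - b • c) - (φ a - a • c) = -((b - a) • c) := by
    rw [heq]
    module
  have hmean : ‖(φ b - b • c) - (φ a - a • c)‖ ≤ C * (b - a) :=
    norm_image_sub_le_of_norm_deriv_le_segment' hderiv hC b (right_mem_Icc.2 hab.le)
  rw [hincr, norm_neg, norm_smul, Real.norm_of_nonneg (sub_nonneg.2 hab.le), mul_comm] at hmean
  exact le_of_mul_le_mul_right hmean (sub_pos.2 hab)

theorem norm_le_of_norm_lineDeriv_sub_le_of_eq_endpoints [AddCommGroup E] [Module ℝ E]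
    {f f' : E → F} {x v : E} {p C : ℝ} {c : F} (hp : 0 < p)
    (hf : ∀ t ∈ Icc 0 p, HasLineDerivAt ℝ f (f' (x + t • v)) (x + t • v) v)
    (heq : f (x + p • v) = f x) (hC : ∀ t ∈ Ico 0 p, ‖f' (x + t • v) - c‖ ≤ C) : ‖c‖ ≤ C := by
  refine norm_le_of_norm_deriv_sub_le_of_eq_endpoints (φ := fun t : ℝ => f (x + t • v)) hp
    (fun t ht => (hasDerivAt_add_smul_of_hasLineDerivAt (hf t ht)).hasDerivWithinAt) ?_ hC
  rw [zero_smul, add_zero, heq]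

theorem periodic_second_derivative_bound_general [SeminormedAddCommGroup E] [NormedSpace ℝ E]
    {f f' f'' : E → F} {v : E} {p α H : ℝ} (hp : 0 < p) (hα : 0 ≤ α) (hH : 0 ≤ H)
    (hf : ∀ x, HasLineDerivAt ℝ f (f' x) x v) (hf' : ∀ x, HasLineDerivAt ℝ f' (f'' x) x v)
    (hper : Periodic f (p • v)) (hHolder : ∀ x y, ‖f'' x - f'' y‖ ≤ H * ‖x - y‖ ^ α) (x : E) :
    ‖f'' x‖ ≤ H * (p * ‖v‖) ^ α := by
  refine norm_le_of_norm_lineDeriv_sub_le_of_eq_endpoints hp (fun t _ => hf' (x + t • v))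
    (periodic_of_hasLineDerivAt hf hper x) fun t ⟨ht₀, htp⟩ => ?_
  calc
    ‖f'' (x + t • v) - f'' x‖ ≤ H * ‖x + t • v - x‖ ^ α := hHolder _ _
    _ = H * (t * ‖v‖) ^ α := by
      rw [add_sub_cancel_left, norm_smul, Real.norm_of_nonneg ht₀]
    _ ≤ H * (p * ‖v‖) ^ α := by gcongr

end MeanValue

/-- Rescaled Lemma 3.5, diagonal second-derivative estimate: if `f : ℝⁿ → ℝ` is `C²`,
periodic with period `p` in the `k`-th coordinate, and `∂²_{kk} f` is `α`-Hölder with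
constant `H`, then `|∂²f/∂x_k²| ≤ H · p^α` everywhere. -/
theorem periodic_second_derivative_bound
    (n : ℕ) (hn : 1 ≤ n) (f : EuclideanSpace ℝ (Fin n) → ℝ)
    (hf : ContDiff ℝ 2 f) (k : Fin n) (p α H : ℝ)
    (hp : 0 < p) (hα0 : 0 < α) (hα1 : α ≤ 1) (hH : 0 ≤ H)
    (hper : ∀ x, f (x + p • EuclideanSpace.single k 1) = f x)
    (hHolder : ∀ x y,
      |fderiv ℝ (fun w => fderiv ℝ f w (EuclideanSpace.single k 1)) x
          (EuclideanSpace.single k 1) -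
        fderiv ℝ (fun w => fderiv ℝ f w (EuclideanSpace.single k 1)) y
          (EuclideanSpace.single k 1)| ≤ H * ‖x - y‖ ^ α) :
    ∀ x, |fderiv ℝ (fun w => fderiv ℝ f w (EuclideanSpace.single k 1)) x
        (EuclideanSpace.single k 1)| ≤ H * p ^ α := by
  have hf₁ : Differentiable ℝ f := hf.differentiable two_ne_zero
  have hf₂ : Differentiable ℝ (fderiv ℝ f) :=
    (hf.fderiv_right (m := 1) one_add_one_eq_two.le).differentiable one_ne_zero
  simpa only [PiLp.norm_single, norm_one, mul_one, Real.norm_eq_abs] using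
    periodic_second_derivative_bound_general hp hα0.le hH
      (fun x => (hf₁ x).hasFDerivAt.hasLineDerivAt (EuclideanSpace.single k 1))
      (fun x => hasLineDerivAt_fderiv_apply (hf₂ x) _ _) hper hHolder
end
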